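/- (Convergence of minimizers.) Under assumptions (C1)-(C4), if τ_ε → τ_0 > 0 and η̂_ε denotes the minimizer of J_ε^{τ_ε} for each ε ≥ 0, then η̂_ε → η̂_0 strongly in X as ε → 0+; consequently the optimal values V*_ε(τ) = min J_ε^τ and the minimal norms N*_ε(τ) converge to V*_0(τ) and N*_0(τ) respectively, for each τ ∈ (0,τ̂). -/

import Mathlib

open MeasureTheory Filter
open scoped RealInnerProductSpace

/-- The functional `J_ε^τ(η) = ½(∫_0^τ ‖B*T^ε_{τ-t}η‖ dt)² + ⟨ψ, T^ε_τ η⟩ + r‖η‖`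
(the semigroups `T^ε` are self-adjoint, so `T^ε* = T^ε`). -/
noncomputable def Jeps {X U : Type*} [NormedAddCommGroup X] [InnerProductSpace ℝ X]
    [CompleteSpace X] [NormedAddCommGroup U] [InnerProductSpace ℝ U] [CompleteSpace U]
    (Tε : ℝ → X →L[ℝ] X) (B : U →L[ℝ] X) (r : ℝ) (ψ : X) (τ : ℝ) (η : X) : ℝ :=
  (1 / 2) * (∫ t in Set.Ioc 0 τ, ‖B.adjoint (Tε (τ - t) η)‖) ^ 2 +
    ⟪ψ, Tε τ η⟫ + r * ‖η‖

structure SGP {X : Type*} [NormedAddCommGroup X] [InnerProductSpace ℝ X]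
    (T : ℝ → X →L[ℝ] X) (R : X →L[ℝ] X) : Prop where
  zero : T 0 = 1
  add : ∀ s t : ℝ, 0 ≤ s → 0 ≤ t → T (s + t) = (T s).comp (T t)
  cont : ∀ x : X, Continuous fun t => T t x
  contr : ∀ t : ℝ, 0 ≤ t → ‖T t‖ ≤ 1
  der : ∀ x : X, ∀ t : ℝ, 0 ≤ t → HasDerivAt (fun s => T s (R x)) (-(T t x)) t
  symm : ∀ x y : X, ⟪R x, y⟫ = ⟪x, R y⟫
  pos : ∀ x : X, 0 ≤ ⟪R x, x⟫
  inj : ∀ x : X, R x = 0 → x = 0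

section
variable {X : Type*} [NormedAddCommGroup X] [InnerProductSpace ℝ X]

lemma cs_form (R : X →L[ℝ] X) (symm : ∀ x y : X, ⟪R x, y⟫ = ⟪x, R y⟫)
    (pos : ∀ x : X, 0 ≤ ⟪R x, x⟫) (x y : X) : ⟪R x, y⟫ ^ 2 ≤ ⟪R x, x⟫ * ⟪R y, y⟫ := by
  have h : ∀ t : ℝ, 0 ≤ ⟪R y, y⟫ * (t * t) + (2 * ⟪R x, y⟫) * t + ⟪R x, x⟫ := by
    intro t
    have h1 := pos (x + t • y)
    have h2 : ⟪R y, x⟫ = ⟪R x, y⟫ := by rw [symm, real_inner_comm]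
    simp only [map_add, map_smul, inner_add_left, inner_add_right, real_inner_smul_left,
      real_inner_smul_right, h2] at h1
    linarith
  have := discrim_le_zero h
  unfold discrim at this
  nlinarith

namespace SGP
variable {T S : ℝ → X →L[ℝ] X} {R Q : X →L[ℝ] X}

lemma le (h : SGP T R) {t : ℝ} (ht : 0 ≤ t) (x : X) : ‖T t x‖ ≤ ‖x‖ := by
  simpa using (T t).le_of_opNorm_le (h.contr t ht) x

lemma integral_eq [CompleteSpace X] (h : SGP T R) {t : ℝ} (ht : 0 ≤ t) (x : X) :
    ∫ s in (0:ℝ)..t, T s x = R x - T t (R x) := by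
  have := intervalIntegral.integral_eq_sub_of_hasDerivAt (a := 0) (b := t)
    (f := fun s => -(T s (R x))) (f' := fun s => T s x) (by
      intro s hs
      rw [Set.uIcc_of_le ht] at hs
      have := (h.der x s hs.1).neg
      rw [neg_neg] at this
      exact this) ((h.cont x).intervalIntegrable _ _)
  rw [this]
  simp [h.zero]
  abel

lemma fixed (h : SGP T R) (z : X) (hz : ∀ t, 0 ≤ t → T t z = z) : z = 0 := by
  have key : ∀ t : ℝ, 0 ≤ t → T t (R z) = R z - t • z := by
    intro t ht
    have := image_norm_le_of_norm_deriv_right_le_deriv_boundary (E := X)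
      (f := fun s => T s (R z) - (R z - s • z)) (f' := fun s => 0) (a := 0) (b := t)
      (B := fun _ => 0) (B' := fun _ => 0)
      (by
        apply Continuous.continuousOn
        exact (h.cont _).sub (by fun_prop))
      (by
        intro s hs
        apply HasDerivAt.hasDerivWithinAt
        have h1 := h.der z s hs.1
        rw [hz s hs.1] at h1
        have h2 : HasDerivAt (fun s : ℝ => R z - s • z) (-z) s := by
          simpa using ((hasDerivAt_id s).smul_const z).const_sub (R z)
        have h3 := h1.sub h2
        rw [sub_self] at h3
        exact h3)
      (by simp [h.zero]) (fun x => hasDerivAt_const _ _) (by simp)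
      (Set.right_mem_Icc.2 ht)
    simpa [sub_eq_zero] using this
  by_contra hne
  have hpos : 0 < ‖z‖ := norm_pos_iff.2 hne
  set t := (2 * ‖R z‖ + 1) / ‖z‖
  have ht : 0 ≤ t := by positivity
  have h1 := h.le ht (R z)
  rw [key t ht] at h1
  have h2 : ‖t • z‖ = 2 * ‖R z‖ + 1 := by
    rw [norm_smul, Real.norm_of_nonneg ht]
    simp only [t]; field_simp
  have h3 := norm_sub_norm_le (t • z) (R z)
  rw [norm_sub_rev] at h3
  linarith

lemma comm [CompleteSpace X] (h : SGP T R) {u : ℝ} (hu : 0 ≤ u) (x : X) :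
    R (T u x) = T u (R x) := by
  rw [← sub_eq_zero]
  apply h.fixed
  intro t ht
  have h1 := h.integral_eq ht (T u x)
  have h2 := h.integral_eq ht x
  have h3 : ∫ s in (0:ℝ)..t, T s (T u x) = T u (∫ s in (0:ℝ)..t, T s x) := by
    rw [← ContinuousLinearMap.intervalIntegral_comp_comm _ ((h.cont x).intervalIntegrable _ _)]
    apply intervalIntegral.integral_congr
    intro s hs
    rw [Set.uIcc_of_le ht] at hs
    have e1 := h.add s u hs.1 hu
    rw [add_comm, h.add u s hu hs.1] at e1
    simpa using (congrArg (fun f => f x) e1).symm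
  rw [h1, h2] at h3
  have e1 := h.add t u ht hu
  rw [add_comm, h.add u t hu ht] at e1
  have e2 : T u (T t (R x)) = T t (T u (R x)) := congrArg (fun f => f (R x)) e1
  rw [map_sub, e2] at h3
  rw [map_sub]
  have : R (T u x) - T u (R x) = T t (R (T u x)) - T t (T u (R x)) := by
    rw [sub_eq_sub_iff_add_eq_add] at h3 ⊢
    rw [h3]; abel
  exact this.symm

lemma duhamel [CompleteSpace X] (h : SGP T R) (k : SGP S Q) {t : ℝ} (ht : 0 ≤ t) (x y : X) :
    |⟪T t (R x), Q y⟫ - ⟪R x, S t (Q y)⟫| ≤ t * ‖R - Q‖ * ‖x‖ * ‖y‖ := by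
  have := norm_image_sub_le_of_norm_deriv_le_segment' (E := ℝ)
    (f := fun s => ⟪T s (R x), S (t - s) (Q y)⟫)
    (f' := fun s => ⟪T s (R x), S (t - s) y⟫ + ⟪-(T s x), S (t - s) (Q y)⟫)
    (C := ‖R - Q‖ * ‖x‖ * ‖y‖) (a := 0) (b := t)
    (by
      intro s hs
      apply HasDerivAt.hasDerivWithinAt
      have h1 := h.der x s hs.1
      have h2 : HasDerivAt (fun s => S (t - s) (Q y)) (S (t - s) y) s := by
        have := (k.der y (t - s) (by linarith [hs.2])).scomp s ((hasDerivAt_id s).const_sub t)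
        simp only [neg_smul, one_smul, neg_neg] at this
        exact this
      exact h1.inner ℝ h2)
    (by
      intro s hs
      have e : ⟪T s (R x), S (t - s) y⟫ + ⟪-(T s x), S (t - s) (Q y)⟫
          = ⟪T s x, (R - Q) (S (t - s) y)⟫ := by
        rw [← h.comm hs.1, ← k.comm (by linarith [hs.2]), h.symm, inner_neg_left]
        simp [inner_sub_right]; ring
      rw [e]
      calc _ ≤ ‖T s x‖ * ‖(R - Q) (S (t - s) y)‖ := norm_inner_le_norm _ _
        _ ≤ ‖x‖ * (‖R - Q‖ * ‖y‖) := by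
          gcongr
          · exact h.le hs.1 x
          · exact ((R - Q).le_opNorm _).trans (by gcongr; exact k.le (by linarith [hs.2]) y)
        _ = _ := by ring)
    t (Set.right_mem_Icc.2 ht)
  simp [k.zero, h.zero] at this
  linarith

lemma dense [CompleteSpace X] (h : SGP T R) : DenseRange R := by
  have h1 : (LinearMap.range R.toLinearMap)ᗮ = ⊥ := by
    rw [Submodule.eq_bot_iff]
    intro z hz
    rw [Submodule.mem_orthogonal] at hz
    apply h.inj
    have := hz (R (R z)) ⟨R z, rfl⟩
    rw [h.symm] at this
    exact inner_self_eq_zero.1 this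
  have h2 := (Submodule.topologicalClosure_eq_top_iff).2 h1
  have h3 := (Submodule.dense_iff_topologicalClosure_eq_top).2 h2
  simpa [DenseRange, LinearMap.coe_range] using h3

lemma tsymm [CompleteSpace X] (h : SGP T R) {t : ℝ} (ht : 0 ≤ t) (x y : X) :
    ⟪T t x, y⟫ = ⟪x, T t y⟫ := by
  have : ∀ p : X × X, ⟪T t p.1, p.2⟫ = ⟪p.1, T t p.2⟫ := by
    have hd : DenseRange (Prod.map R R) := h.dense.prodMap h.dense
    refine fun p => congrFun (hd.equalizer (g := fun p : X × X => ⟪T t p.1, p.2⟫)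
      (h := fun p : X × X => ⟪p.1, T t p.2⟫) (by fun_prop) (by fun_prop) ?_) p
    funext ⟨a, b⟩
    have := h.duhamel h ht a b
    simp at this
    simpa [sub_eq_zero] using this
  exact this (x, y)

lemma sa [CompleteSpace X] (h : SGP T R) {t : ℝ} (ht : 0 ≤ t) : star (T t) = T t :=
  (ContinuousLinearMap.isSelfAdjoint_iff_isSymmetric.2 (fun x y => h.tsymm ht x y)).star_eq

lemma sar [CompleteSpace X] (h : SGP T R) : star R = R :=
  (ContinuousLinearMap.isSelfAdjoint_iff_isSymmetric.2 (fun x y => h.symm x y)).star_eq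

lemma smoothing [CompleteSpace X] (h : SGP T R) {t : ℝ} (ht : 0 ≤ t) (z : X) :
    t * ‖T t z‖ ≤ ‖R z‖ := by
  refine h.dense.induction_on (p := fun z => t * ‖T t z‖ ≤ ‖R z‖) z
    (isClosed_le (by fun_prop) (by fun_prop)) ?_
  intro x
  have := antitoneOn_of_deriv_nonpos (convex_Icc 0 t)
    (f := fun s => ⟪T s (R (R x)), T s (R (R x))⟫ + (2 * s) * ⟪T s (R x), T s (R (R x))⟫
      + (2 * s ^ 2) * ⟪T s (R x), T s (R x)⟫)
  have hd : ∀ s, 0 ≤ s → HasDerivAt (fun s => ⟪T s (R (R x)), T s (R (R x))⟫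
      + (2 * s) * ⟪T s (R x), T s (R (R x))⟫
      + (2 * s ^ 2) * ⟪T s (R x), T s (R x)⟫) (-4 * s ^ 2 * ⟪R (T s x), T s x⟫) s := by
    intro s hs
    have d1 := h.der (R x) s hs
    have d2 := h.der x s hs
    have e1 : HasDerivAt (fun s : ℝ => 2 * s) 2 s := by
      simpa using (hasDerivAt_id s).const_mul (2:ℝ)
    have e2 : HasDerivAt (fun s : ℝ => 2 * s ^ 2) (2 * (2 * s)) s := by
      simpa using (hasDerivAt_pow 2 s).const_mul (2:ℝ)
    have := ((d1.inner ℝ d1).add (e1.mul (d2.inner ℝ d1))).add (e2.mul (d2.inner ℝ d2))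
    refine this.congr_deriv ?_
    have c1 : ⟪T s x, T s (R (R x))⟫ = ⟪T s (R x), T s (R x)⟫ := by
      rw [← h.comm hs, ← h.symm, h.comm hs]
    have c2 : ⟪T s (R x), T s x⟫ = ⟪T s x, T s (R x)⟫ := real_inner_comm _ _
    have c3 : ⟪T s (R (R x)), T s (R x)⟫ = ⟪T s (R x), T s (R (R x))⟫ := real_inner_comm _ _
    simp only [inner_neg_left, inner_neg_right, h.comm hs, c1, c2, c3]
    ring
  have hle := this (fun s hs => (hd s hs.1).continuousAt.continuousWithinAt)
    (fun s hs => (hd s (interior_subset hs).1).differentiableAt.differentiableWithinAt)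
    (fun s hs => by
      rw [(hd s (interior_subset hs).1).deriv]
      have := mul_nonneg (sq_nonneg s) (h.pos (T s x))
      linarith) (Set.left_mem_Icc.2 ht) (Set.right_mem_Icc.2 ht) ht
  have p1 : 0 ≤ ⟪T t (R x), T t (R (R x))⟫ := by
    rw [← h.comm ht (R x), real_inner_comm]; exact h.pos _
  simp only [h.zero, real_inner_self_eq_norm_sq, one_apply_eq_self] at hle
  have p2 := mul_nonneg ht p1
  have p3 := sq_nonneg (t * ‖T t (R x)‖)
  apply le_of_sq_le_sq _ (norm_nonneg _)
  nlinarith [sq_nonneg ‖T t (R (R x))‖]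

lemma smoothing_op [CompleteSpace X] (h : SGP T R) {t : ℝ} (ht : 0 < t) (W : X →L[ℝ] X) :
    ‖T t * W‖ ≤ ‖R * W‖ / t := by
  apply ContinuousLinearMap.opNorm_le_bound _ (by positivity)
  intro x
  have h1 := h.smoothing ht.le (W x)
  have h2 := (R * W).le_opNorm x
  simp only [mul_apply_eq_comp] at h2 ⊢
  rw [div_mul_eq_mul_div, le_div_iff₀ ht]
  linarith

lemma small [CompleteSpace X] (h : SGP T R) {u : ℝ} (hu : 0 ≤ u) : ‖R * (T u - 1)‖ ≤ u := by
  apply ContinuousLinearMap.opNorm_le_bound _ hu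
  intro x
  have h1 := h.integral_eq hu x
  have h2 : ‖∫ s in (0:ℝ)..u, T s x‖ ≤ ‖x‖ * |u - 0| :=
    intervalIntegral.norm_integral_le_of_norm_le_const (by
      intro s hs
      rw [Set.uIoc_of_le hu] at hs
      exact h.le hs.1.le x)
  rw [h1, norm_sub_rev] at h2
  simpa [h.comm hu, abs_of_nonneg hu, mul_comm] using h2

lemma small' [CompleteSpace X] (_h : SGP T R) (k : SGP S Q) {u : ℝ} (hu : 0 ≤ u) :
    ‖R * (S u - 1)‖ ≤ 2 * ‖R - Q‖ + u := by
  have e : R * (S u - 1) = (R - Q) * (S u - 1) + Q * (S u - 1) := by noncomm_ring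
  rw [e]
  have h1 : ‖S u - 1‖ ≤ 2 := by
    refine (norm_sub_le _ _).trans ?_
    have := k.contr u hu
    have := ContinuousLinearMap.norm_id_le (𝕜 := ℝ) (E := X)
    have : ‖(1 : X →L[ℝ] X)‖ ≤ 1 := this
    linarith
  calc _ ≤ ‖(R - Q) * (S u - 1)‖ + ‖Q * (S u - 1)‖ := norm_add_le _ _
    _ ≤ ‖R - Q‖ * 2 + u := by
      gcongr
      · exact (norm_mul_le _ _).trans (by gcongr)
      · exact k.small hu
    _ = _ := by ring

lemma diff_bound [CompleteSpace X] (h : SGP T R) (k : SGP S Q) {t u : ℝ} (ht : 0 ≤ t)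
    (hu : 0 < u) :
    ‖T (t + u) - S (t + u)‖ ≤ t * ‖R - Q‖ / u / u + 2 * ((2 * ‖R - Q‖ + u) / (t + u)) := by
  have hd : ‖Q * (T t - S t) * R‖ ≤ t * ‖R - Q‖ := by
    apply ContinuousLinearMap.opNorm_le_bound _ (by positivity)
    intro x
    set y := (Q * (T t - S t) * R) x with hy
    have h1 := h.duhamel k ht x y
    have h2 : ⟪T t (R x), Q y⟫ - ⟪R x, S t (Q y)⟫ = ‖y‖ ^ 2 := by
      rw [← k.tsymm ht, ← k.symm, ← k.symm, ← inner_sub_left, ← real_inner_self_eq_norm_sq]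
      congr 1
      simp [hy]
    rw [h2, abs_of_nonneg (by positivity)] at h1
    by_cases hy0 : ‖y‖ = 0
    · rw [hy0]; positivity
    · have : 0 < ‖y‖ := lt_of_le_of_ne (norm_nonneg _) (Ne.symm hy0)
      nlinarith
  have h1 : ‖S u * ((T t - S t) * R)‖ ≤ t * ‖R - Q‖ / u := by
    refine (k.smoothing_op hu _).trans ?_
    rw [← mul_assoc]; gcongr
  have h2 : ‖R * ((T t - S t) * S u)‖ ≤ t * ‖R - Q‖ / u := by
    rw [← norm_star]
    simpa [star_mul, star_sub, h.sar, h.sa ht, k.sa ht, k.sa hu.le, mul_assoc] using h1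
  have h3 : ‖T u * ((T t - S t) * S u)‖ ≤ t * ‖R - Q‖ / u / u := by
    refine (h.smoothing_op hu _).trans ?_
    gcongr
  have htu : 0 < t + u := by positivity
  have h4 : ‖T (t + u) * (S u - 1)‖ ≤ (2 * ‖R - Q‖ + u) / (t + u) := by
    refine (h.smoothing_op htu _).trans ?_
    gcongr
    exact h.small' k hu.le
  have h5 : ‖S (t + u) * (T u - 1)‖ ≤ (2 * ‖R - Q‖ + u) / (t + u) := by
    refine (k.smoothing_op htu _).trans ?_
    gcongr
    rw [norm_sub_rev]
    exact k.small' h hu.le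
  have h6 : ‖(T u - 1) * S (t + u)‖ ≤ (2 * ‖R - Q‖ + u) / (t + u) := by
    rw [← norm_star]
    simpa [star_mul, star_sub, h.sa hu.le, k.sa htu.le] using h5
  have e1 : T u * T t = T (t + u) := by rw [add_comm]; exact (h.add u t hu.le ht).symm
  have e2 : S t * S u = S (t + u) := (k.add t u ht hu.le).symm
  have e : T (t + u) - S (t + u) = T u * ((T t - S t) * S u)
      - T (t + u) * (S u - 1) + (T u - 1) * S (t + u) := by
    rw [← e1, ← e2]; noncomm_ring
  rw [e]
  have n1 := norm_add_le (T u * ((T t - S t) * S u) - T (t + u) * (S u - 1))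
    ((T u - 1) * S (t + u))
  have n2 := norm_sub_le (T u * ((T t - S t) * S u)) (T (t + u) * (S u - 1))
  linarith

end SGP
end

section
variable {X : Type*} [NormedAddCommGroup X] [InnerProductSpace ℝ X]

lemma min_conv {l : Filter ℝ} (L : ℝ → Seminorm ℝ X) (p : ℝ → X →ₗ[ℝ] ℝ) (r K M : ℝ)
    (hr : 0 < r) (hK : 0 ≤ K) (hM : 0 ≤ M)
    (hL : ∀ κ > 0, ∀ᶠ ε in l, ∀ x, |L ε x - L 0 x| ≤ κ * ‖x‖)
    (hp : ∀ κ > 0, ∀ᶠ ε in l, ∀ x, |p ε x - p 0 x| ≤ κ * ‖x‖)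
    (hpL : ∀ x, |p 0 x| ≤ K * L 0 x) (hLM : ∀ x, L 0 x ≤ M * ‖x‖)
    (J : ℝ → X → ℝ) (hJ : ∀ ε x, J ε x = (1 / 2) * (L ε x) ^ 2 + p ε x + r * ‖x‖)
    (η : ℝ → X) (hη0 : ∀ x, J 0 (η 0) ≤ J 0 x) (hη : ∀ᶠ ε in l, ∀ x, J ε (η ε) ≤ J ε x) :
    Tendsto η l (nhds (η 0)) ∧ Tendsto (fun ε => J ε (η ε)) l (nhds (J 0 (η 0))) := by
  -- uniform convergence on balls
  have hU : ∀ R > 0, ∀ κ > 0, ∀ᶠ ε in l, ∀ x, ‖x‖ ≤ R → |J ε x - J 0 x| ≤ κ := by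
    intro R hR κ hκ
    obtain ⟨c, hc, hc1, hc2⟩ : ∃ c : ℝ, 0 < c ∧ c ≤ 1 ∧ c * (R * ((2 * M + 1) * R) + R) ≤ κ := by
      have hD : 0 < R * ((2 * M + 1) * R) + R := by positivity
      refine ⟨min 1 (κ / (R * ((2 * M + 1) * R) + R)), by positivity, min_le_left _ _, ?_⟩
      rw [← le_div_iff₀ hD]
      exact min_le_right _ _
    filter_upwards [hL c hc, hp c hc] with ε h1 h2 x hx
    have h1 := h1 x
    have h2 := h2 x
    have h3 := hLM x
    have h0 : 0 ≤ L 0 x := apply_nonneg _ _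
    have h0' : 0 ≤ L ε x := apply_nonneg _ _
    have e : J ε x - J 0 x = (1 / 2) * ((L ε x - L 0 x) * (L ε x + L 0 x)) + (p ε x - p 0 x) := by
      rw [hJ, hJ]; ring
    have b1 : c * ‖x‖ ≤ c * R := by gcongr
    have b2 : M * ‖x‖ ≤ M * R := by gcongr
    have b3 : L ε x + L 0 x ≤ (2 * M + 1) * R := by
      have := (abs_le.1 h1).2
      nlinarith
    have b4 : |(L ε x - L 0 x) * (L ε x + L 0 x)| ≤ (c * R) * ((2 * M + 1) * R) := by
      rw [abs_mul, abs_of_nonneg (add_nonneg h0' h0)]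
      gcongr
      exact h1.trans b1
    rw [e]
    refine (abs_add_le _ _).trans ?_
    rw [abs_mul, abs_of_pos (by norm_num : (0:ℝ) < 1 / 2)]
    have : 0 ≤ (c * R) * ((2 * M + 1) * R) := by positivity
    nlinarith
  -- coercivity
  have hcoer : ∀ x, r * ‖x‖ - K ^ 2 / 2 ≤ J 0 x := by
    intro x
    rw [hJ]
    have := (abs_le.1 (hpL x)).1
    nlinarith [sq_nonneg (L 0 x - K)]
  have hJz : ∀ ε, J ε 0 = 0 := by intro ε; simp [hJ]
  obtain ⟨R, hR, hRr, hR0⟩ : ∃ R : ℝ, 0 < R ∧ 1 + K ^ 2 / 2 ≤ r * R ∧ ‖η 0‖ ≤ R := by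
    refine ⟨(1 + K ^ 2 / 2) / r + ‖η 0‖, by positivity, ?_, ?_⟩
    · rw [mul_add, mul_div_cancel₀ _ hr.ne']
      have := mul_nonneg hr.le (norm_nonneg (η 0))
      linarith
    · have : 0 ≤ (1 + K ^ 2 / 2) / r := by positivity
      linarith
  have hbd : ∀ᶠ ε in l, ‖η ε‖ ≤ R := by
    filter_upwards [hη, hU R hR (1/2) (by norm_num)] with ε h1 h2
    by_contra! hlt
    have hpos : 0 < ‖η ε‖ := hR.trans hlt
    set s := R / ‖η ε‖ with hs
    have hs0 : 0 < s := by positivity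
    have hs1 : s ≤ 1 := (div_le_one hpos).2 hlt.le
    have hn : ‖s • η ε‖ = R := by
      rw [norm_smul, Real.norm_of_nonneg hs0.le, hs]; field_simp
    have h3 := (abs_le.1 (h2 (s • η ε) hn.le)).1
    have h4 := hcoer (s • η ε)
    have h5 := h1 0
    rw [hJz] at h5
    have h6 : J ε (s • η ε) ≤ s * J ε (η ε) := by
      rw [hJ, hJ, map_smul_eq_mul, map_smul, norm_smul, Real.norm_of_nonneg hs0.le, smul_eq_mul]
      have : s ^ 2 * (L ε (η ε)) ^ 2 ≤ s * (L ε (η ε)) ^ 2 := by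
        gcongr; nlinarith
      nlinarith
    rw [hn] at h4
    have h7 : s * J ε (η ε) ≤ 0 := mul_nonpos_of_nonneg_of_nonpos hs0.le h5
    linarith
  have hV : Tendsto (fun ε => J ε (η ε)) l (nhds (J 0 (η 0))) := by
    rw [Metric.tendsto_nhds]
    intro κ hκ
    filter_upwards [hη, hU R hR (κ/2) (by positivity), hbd] with ε h1 h2 h3
    have a1 := abs_le.1 (h2 _ h3)
    have a2 := abs_le.1 (h2 _ hR0)
    have a3 := h1 (η 0)
    have a4 := hη0 (η ε)
    rw [Real.dist_eq, abs_lt]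
    constructor <;> linarith [a1.1, a1.2, a2.1, a2.2]
  have hV0 : Tendsto (fun ε => J 0 (η ε)) l (nhds (J 0 (η 0))) := by
    rw [Metric.tendsto_nhds]
    intro κ hκ
    filter_upwards [hη, hU R hR (κ/3) (by positivity), hbd] with ε h1 h2 h3
    have a1 := abs_le.1 (h2 _ h3)
    have a2 := abs_le.1 (h2 _ hR0)
    have a3 := h1 (η 0)
    have a4 := hη0 (η ε)
    rw [Real.dist_eq, abs_lt]
    constructor <;> linarith [a1.1, a1.2, a2.1, a2.2]
  refine ⟨?_, hV⟩
  set b := η 0 with hb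
  have hd : Tendsto (fun ε => J 0 (η ε) - J 0 b) l (nhds 0) := by
    simpa using hV0.sub_const (J 0 b)
  have hgap : ∀ a, (L 0 a - L 0 b) ^ 2 / 4 + r * (‖a‖ + ‖b‖ - ‖a + b‖) ≤ J 0 a - J 0 b := by
    intro a
    have h1 := hη0 ((1 / 2 : ℝ) • (a + b))
    rw [hJ 0 ((1 / 2 : ℝ) • (a + b)), map_smul_eq_mul, map_smul, norm_smul, map_add (p 0),
      Real.norm_of_nonneg (by norm_num : (0:ℝ) ≤ 1 / 2), smul_eq_mul] at h1
    have h2 : L 0 (a + b) ≤ L 0 a + L 0 b := map_add_le_add _ _ _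
    have h3 : (L 0 (a + b)) ^ 2 ≤ (L 0 a + L 0 b) ^ 2 := by
      have : 0 ≤ L 0 (a + b) := apply_nonneg _ _
      gcongr
    have h4 := hJ 0 a
    have h5 := hJ 0 b
    nlinarith
  have hLt : Tendsto (fun ε => L 0 (η ε) - L 0 b) l (nhds 0) := by
    have : Tendsto (fun ε => Real.sqrt (4 * (J 0 (η ε) - J 0 b))) l (nhds 0) := by
      have := (Real.continuous_sqrt.tendsto _).comp (hd.const_mul 4)
      rw [mul_zero, Real.sqrt_zero] at this
      exact this
    refine squeeze_zero_norm (fun ε => ?_) this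
    apply Real.abs_le_sqrt
    have h1 := hgap (η ε)
    have h2 : 0 ≤ r * (‖η ε‖ + ‖b‖ - ‖η ε + b‖) :=
      mul_nonneg hr.le (by linarith [norm_add_le (η ε) b])
    linarith
  by_cases hb0 : b = 0
  · rw [hb0]
    rw [hb0] at hLt hd
    simp only [map_zero, sub_zero, hJz] at hLt hd
    rw [tendsto_zero_iff_norm_tendsto_zero]
    have : Tendsto (fun ε => (J 0 (η ε) + K * L 0 (η ε)) / r) l (nhds 0) := by
      simpa using (hd.add (hLt.const_mul K)).div_const r
    refine squeeze_zero (fun _ => norm_nonneg _) (fun ε => ?_) this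
    rw [le_div_iff₀ hr]
    have h1 := hJ 0 (η ε)
    have h2 := (abs_le.1 (hpL (η ε))).1
    nlinarith [sq_nonneg (L 0 (η ε))]
  · have hbpos : 0 < ‖b‖ := norm_pos_iff.2 hb0
    have hLb : 0 < L 0 b := by
      refine lt_of_le_of_ne (apply_nonneg _ _) (fun h => ?_)
      have h1 := hη0 0
      have h2 := hpL b
      rw [← h, mul_zero] at h2
      have h3 : p 0 b = 0 := by simpa using h2
      rw [hJz, hJ, ← h, h3] at h1
      have := mul_pos hr hbpos
      linarith
    have hs0 : Tendsto (fun ε => η ε - (‖η ε‖ / ‖b‖) • b) l (nhds 0) := by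
      have : Tendsto (fun ε => Real.sqrt (R / ‖b‖ * ((J 0 (η ε) - J 0 b) / r * (2 * (R + ‖b‖)))))
          l (nhds 0) := by
        have := (Real.continuous_sqrt.tendsto _).comp
          (((hd.div_const r).mul_const (2 * (R + ‖b‖))).const_mul (R / ‖b‖))
        rw [zero_div, zero_mul, mul_zero, Real.sqrt_zero] at this
        exact this
      refine squeeze_zero_norm' ?_ this
      filter_upwards [hbd] with ε hε
      apply Real.le_sqrt_of_sq_le
      set a := η ε
      have e1 : ‖a - (‖a‖ / ‖b‖) • b‖ ^ 2 = (‖a‖ / ‖b‖) * (2 * (‖a‖ * ‖b‖ - ⟪a, b⟫)) := by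
        rw [norm_sub_sq_real, norm_smul, real_inner_smul_right, Real.norm_of_nonneg (by positivity)]
        field_simp
        ring
      have e2 : 2 * (‖a‖ * ‖b‖ - ⟪a, b⟫) = (‖a‖ + ‖b‖ - ‖a + b‖) * (‖a‖ + ‖b‖ + ‖a + b‖) := by
        have := norm_add_sq_real a b
        nlinarith
      have g1 : ‖a‖ + ‖b‖ - ‖a + b‖ ≤ (J 0 a - J 0 b) / r := by
        rw [le_div_iff₀ hr]
        have := hgap a
        nlinarith [sq_nonneg (L 0 a - L 0 b)]
      have g0 : 0 ≤ ‖a‖ + ‖b‖ - ‖a + b‖ := by linarith [norm_add_le a b]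
      have g2 : ‖a‖ + ‖b‖ + ‖a + b‖ ≤ 2 * (R + ‖b‖) := by linarith [norm_add_le a b]
      rw [e1, e2]
      have := g0.trans g1
      gcongr
    have hs1 : Tendsto (fun ε => ‖η ε‖ / ‖b‖ * L 0 b - L 0 (η ε)) l (nhds 0) := by
      have : Tendsto (fun ε => M * ‖η ε - (‖η ε‖ / ‖b‖) • b‖) l (nhds 0) := by
        simpa using hs0.norm.const_mul M
      refine squeeze_zero_norm (fun ε => ?_) this
      have h1 := hLM (η ε - (‖η ε‖ / ‖b‖) • b)
      have h2 := abs_sub_map_le_sub (L 0) (η ε) ((‖η ε‖ / ‖b‖) • b)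
      rw [map_smul_eq_mul, Real.norm_of_nonneg (by positivity)] at h2
      rw [Real.norm_eq_abs, abs_sub_comm]
      exact h2.trans h1
    have hs2 : Tendsto (fun ε => ‖η ε‖ / ‖b‖) l (nhds 1) := by
      have := ((hs1.add hLt).add_const (L 0 b)).div_const (L 0 b)
      rw [add_zero, zero_add, div_self hLb.ne'] at this
      refine this.congr (fun ε => ?_)
      field_simp
      ring
    have := hs0.add (hs2.smul_const b)
    simpa using this

lemma res_conv {l : Filter ℝ} (R : ℝ → X →L[ℝ] X) (c : ℝ) (hc : 0 ≤ c)
    (hcpt : IsCompactOperator (R 0))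
    (symm : ∀ᶠ ε in l, ∀ x y : X, ⟪R ε x, y⟫ = ⟪x, R ε y⟫)
    (pos : ∀ᶠ ε in l, ∀ x : X, 0 ≤ ⟪R ε x, x⟫)
    (hle : ∀ᶠ ε in l, ∀ x : X, ⟪R ε x, x⟫ ≤ c * ⟪R 0 x, x⟫)
    (hs : ∀ x, Tendsto (fun ε => R ε x) l (nhds (R 0 x))) :
    Tendsto (fun ε => ‖R 0 - R ε‖) l (nhds 0) := by
  rw [Metric.tendsto_nhds]
  intro κ hκ
  have hD : Tendsto (fun d : ℝ => d + Real.sqrt (c * ‖R 0‖ * (c * (2 * d))) + d)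
      (nhdsWithin 0 (Set.Ioi 0)) (nhds 0) := by
    have : Continuous (fun d : ℝ => d + Real.sqrt (c * ‖R 0‖ * (c * (2 * d))) + d) := by fun_prop
    have := this.tendsto 0
    simp only [mul_zero, Real.sqrt_zero, add_zero] at this
    exact this.mono_left nhdsWithin_le_nhds
  obtain ⟨d, hd1, hd⟩ := ((hD.eventually (gt_mem_nhds hκ)).and self_mem_nhdsWithin).exists
  have hd : 0 < d := hd
  have htb : TotallyBounded (R 0 '' Metric.closedBall 0 1) :=
    (hcpt.isCompact_closure_image_closedBall 1).totallyBounded.subset subset_closure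
  obtain ⟨t, hts, htf, htc⟩ := Metric.finite_approx_of_totallyBounded htb d hd
  obtain ⟨F, hFs, hFf, hFt⟩ := Set.exists_subset_image_finite_and
    (p := fun t => R 0 '' Metric.closedBall 0 1 ⊆ ⋃ y ∈ t, Metric.ball y d)|>.1 ⟨t, hts, htf, htc⟩
  have hF : ∀ᶠ ε in l, ∀ y ∈ F, ‖R 0 y - R ε y‖ < d := by
    rw [hFf.eventually_all] 
    intro y _
    have := Metric.tendsto_nhds.1 (hs y) d hd
    filter_upwards [this] with ε h
    rwa [dist_comm, dist_eq_norm] at h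
  filter_upwards [symm, pos, hle, hF] with ε h1 h2 h3 h4
  rw [Real.dist_eq, sub_zero, abs_of_nonneg (norm_nonneg _)]
  refine lt_of_le_of_lt ?_ hd1
  have hsq : ∀ w, ‖R ε w‖ ^ 2 ≤ c * ‖R 0‖ * ⟪R ε w, w⟫ := by
    intro w
    have a1 := cs_form (R ε) h1 h2 w (R ε w)
    have a2 := h3 (R ε w)
    have a3 : ⟪R 0 (R ε w), R ε w⟫ ≤ ‖R 0‖ * ‖R ε w‖ * ‖R ε w‖ :=
      (real_inner_le_norm _ _).trans (by gcongr; exact (R 0).le_opNorm _)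
    have a4 : ⟪R ε (R ε w), R ε w⟫ ≤ c * (‖R 0‖ * ‖R ε w‖ * ‖R ε w‖) := a2.trans (by gcongr)
    rw [real_inner_self_eq_norm_sq] at a1
    have a5 : (‖R ε w‖ ^ 2) ^ 2 ≤ ⟪R ε w, w⟫ * (c * (‖R 0‖ * ‖R ε w‖ * ‖R ε w‖)) :=
      a1.trans (mul_le_mul_of_nonneg_left a4 (h2 w))
    by_cases hz : ‖R ε w‖ = 0
    · rw [hz]
      have := mul_nonneg (mul_nonneg hc (norm_nonneg (R 0))) (h2 w)
      simpa using this
    · have : 0 < ‖R ε w‖ ^ 2 := by positivity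
      nlinarith
  refine ContinuousLinearMap.opNorm_le_of_unit_norm (by positivity) ?_
  intro x hx
  have hxm : R 0 x ∈ R 0 '' Metric.closedBall 0 1 := ⟨x, by simp [hx], rfl⟩
  have := hFt hxm
  simp only [Set.mem_iUnion, Set.mem_image] at this
  obtain ⟨_, ⟨y, hy, rfl⟩, hxy⟩ := this
  have hy1 : ‖y‖ ≤ 1 := by simpa using hFs hy
  set w := x - y with hw
  have hw2 : ‖w‖ ≤ 2 := (norm_sub_le _ _).trans (by linarith)
  have hRw : ‖R 0 w‖ ≤ d := by
    rw [Metric.mem_ball, dist_eq_norm] at hxy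
    rw [hw, map_sub]; exact hxy.le
  have b1 : ⟪R 0 w, w⟫ ≤ 2 * d :=
    (real_inner_le_norm _ _).trans (by nlinarith [norm_nonneg w, norm_nonneg (R 0 w)])
  have b2 : ‖R ε w‖ ≤ Real.sqrt (c * ‖R 0‖ * (c * (2 * d))) := by
    apply Real.le_sqrt_of_sq_le
    refine (hsq w).trans ?_
    gcongr
    exact (h3 w).trans (by gcongr)
  have e : (R 0 - R ε) x = (R 0 y - R ε y) - R ε w + R 0 w := by
    simp [hw]
  rw [e]
  have n1 := norm_add_le ((R 0 y - R ε y) - R ε w) (R 0 w)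
  have n2 := norm_sub_le (R 0 y - R ε y) (R ε w)
  linarith [h4 y hy]

end

section
variable {X U : Type*} [NormedAddCommGroup X] [InnerProductSpace ℝ X] [CompleteSpace X]
  [NormedAddCommGroup U] [InnerProductSpace ℝ U] [CompleteSpace U]

lemma sg_conv {l : Filter ℝ} {T : ℝ → ℝ → X →L[ℝ] X} {R : ℝ → X →L[ℝ] X}
    (h : ∀ ε, SGP (T ε) (R ε)) (hR : Tendsto (fun ε => ‖R 0 - R ε‖) l (nhds 0))
    {a b κ : ℝ} (ha : 0 < a) (hκ : 0 < κ) :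
    ∀ᶠ ε in l, ∀ s ∈ Set.Icc a b, ‖T ε s - T 0 s‖ ≤ κ := by
  by_cases hab : a ≤ b
  swap
  · exact Eventually.of_forall fun ε s hs => absurd (hs.1.trans hs.2) hab
  have hb : 0 < b := ha.trans_le hab
  set u := min a (κ * a / 8) with hu
  have hu0 : 0 < u := by positivity
  have hlim : Tendsto (fun ε => b * ‖R 0 - R ε‖ / u / u + 2 * ((2 * ‖R 0 - R ε‖ + u) / a)) l
      (nhds (b * 0 / u / u + 2 * ((2 * 0 + u) / a))) :=
    (((hR.const_mul b).div_const u).div_const u).add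
      ((((hR.const_mul 2).add_const u).div_const a).const_mul 2)
  have hlt : b * 0 / u / u + 2 * ((2 * 0 + u) / a) < κ := by
    have : u / a ≤ κ / 8 := by
      rw [div_le_iff₀ ha]
      exact (min_le_right _ _).trans (by linarith)
    simp
    linarith
  filter_upwards [hlim.eventually (gt_mem_nhds hlt)] with ε hε s hs
  have hus : u ≤ s := (min_le_left _ _).trans hs.1
  have := (h 0).diff_bound (h ε) (t := s - u) (by linarith) hu0
  rw [sub_add_cancel] at this
  rw [norm_sub_rev]
  refine this.trans (le_trans ?_ hε.le)
  gcongr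
  · linarith [hs.2]
  · exact hs.1

noncomputable def obsSem (T : ℝ → X →L[ℝ] X) (hT : ∀ x, Continuous fun t => T t x)
    (C : X →L[ℝ] U) (τ : ℝ) : Seminorm ℝ X :=
  Seminorm.of (fun x => ∫ t in Set.Ioc 0 τ, ‖C (T (τ - t) x)‖)
    (by
      have hc : ∀ x, Continuous fun t => ‖C (T (τ - t) x)‖ := fun x =>
        (C.continuous.comp ((hT x).comp (continuous_const.sub continuous_id))).norm
      have hi : ∀ x, IntegrableOn (fun t => ‖C (T (τ - t) x)‖) (Set.Ioc 0 τ) := fun x =>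
        (hc x).integrableOn_Ioc
      intro x y
      rw [← integral_add (hi x) (hi y)]
      apply integral_mono (hi _) ((hi x).add (hi y))
      intro t
      simp only [map_add]
      exact norm_add_le _ _)
    (by
      intro a x
      simp only [map_smul, norm_smul, integral_const_mul])

lemma obsSem_eq (T : ℝ → X →L[ℝ] X) (hT : ∀ x, Continuous fun t => T t x)
    (C : X →L[ℝ] U) {τ : ℝ} (hτ : 0 ≤ τ) (x : X) :
    obsSem T hT C τ x = ∫ t in (0:ℝ)..τ, ‖C (T t x)‖ := by
  change ∫ t in Set.Ioc 0 τ, ‖C (T (τ - t) x)‖ = _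
  rw [← intervalIntegral.integral_of_le hτ,
    intervalIntegral.integral_comp_sub_left (fun t => ‖C (T t x)‖)]
  simp

lemma main_conv {l : Filter ℝ} {T : ℝ → ℝ → X →L[ℝ] X} {R : ℝ → X →L[ℝ] X}
    (h : ∀ ε, SGP (T ε) (R ε)) (hR : Tendsto (fun ε => ‖R 0 - R ε‖) l (nhds 0))
    (B : U →L[ℝ] X) (τ : ℝ → ℝ) (hτ : ∀ ε, 0 < τ ε) (hτl : Tendsto τ l (nhds (τ 0)))
    (K : ℝ) (hK : 0 ≤ K)
    (hobs : ∀ x : X, ‖T 0 (τ 0) x‖ ≤ K * ∫ t in Set.Ioc 0 (τ 0), ‖B.adjoint (T 0 t x)‖)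
    (r : ℝ) (hr : 0 < r) (ψ : X) (η : ℝ → X)
    (hη : ∀ ε, ∀ ξ : X, Jeps (T ε) B r ψ (τ ε) (η ε) ≤ Jeps (T ε) B r ψ (τ ε) ξ) :
    Tendsto η l (nhds (η 0)) ∧
    Tendsto (fun ε => Jeps (T ε) B r ψ (τ ε) (η ε)) l (nhds (Jeps (T 0) B r ψ (τ 0) (η 0))) := by
  have hcont : ∀ ε x, Continuous fun t => ‖B.adjoint (T ε t x)‖ := fun ε x =>
    (B.adjoint.continuous.comp ((h ε).cont x)).norm
  have hint : ∀ ε x (a b : ℝ), IntervalIntegrable (fun t => ‖B.adjoint (T ε t x)‖) volume a b :=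
    fun ε x a b => (hcont ε x).intervalIntegrable a b
  set β := ‖B.adjoint‖ with hβ
  have hβ0 : 0 ≤ β := norm_nonneg _
  have hbd : ∀ ε x t, 0 ≤ t → ‖B.adjoint (T ε t x)‖ ≤ β * ‖x‖ := fun ε x t ht =>
    (B.adjoint.le_opNorm _).trans (by gcongr; exact (h ε).le ht x)
  have hτ0 := hτ 0
  refine min_conv (fun ε => obsSem (T ε) (h ε).cont B.adjoint (τ ε))
    (fun ε => ((innerSL ℝ ψ).comp (T ε (τ ε))).toLinearMap) r (‖ψ‖ * K) (β * τ 0) hr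
    (by positivity) (by positivity) ?_ ?_ ?_ ?_
    (fun ε x => Jeps (T ε) B r ψ (τ ε) x) (fun ε x => rfl) η (hη 0) (Eventually.of_forall hη)
  · intro κ hκ
    -- choose the small initial layer
    obtain ⟨a, ha, haτ, haκ⟩ : ∃ a : ℝ, 0 < a ∧ a ≤ τ 0 ∧ 2 * β * a ≤ κ / 3 := by
      refine ⟨min (τ 0) (κ / 3 / (2 * β + 1)), by positivity, min_le_left _ _, ?_⟩
      calc 2 * β * min (τ 0) (κ / 3 / (2 * β + 1)) ≤ (2 * β + 1) * (κ / 3 / (2 * β + 1)) := by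
            gcongr
            · linarith
            · exact min_le_right _ _
        _ = κ / 3 := by field_simp
    have hκ2 : 0 < κ / 3 / (β * τ 0 + 1) := by positivity
    have hκ3 : 0 < κ / 3 / (β + 1) := by positivity
    filter_upwards [sg_conv h hR (b := τ 0) ha hκ2, Metric.tendsto_nhds.1 hτl _ hκ3]
      with ε h1 h2 x
    rw [obsSem_eq _ _ _ (hτ ε).le, obsSem_eq _ _ _ (hτ 0).le,
      ← intervalIntegral.integral_add_adjacent_intervals (hint ε x 0 (τ 0)) (hint ε x (τ 0) (τ ε)),
      ← intervalIntegral.integral_add_adjacent_intervals (hint ε x 0 a) (hint ε x a (τ 0)),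
      ← intervalIntegral.integral_add_adjacent_intervals (hint 0 x 0 a) (hint 0 x a (τ 0))]
    have e1 : |(∫ t in (0:ℝ)..a, ‖B.adjoint (T ε t x)‖) - ∫ t in (0:ℝ)..a, ‖B.adjoint (T 0 t x)‖|
        ≤ κ / 3 * ‖x‖ := by
      rw [← intervalIntegral.integral_sub (hint ε x 0 a) (hint 0 x 0 a), ← Real.norm_eq_abs]
      refine (intervalIntegral.norm_integral_le_of_norm_le_const (C := 2 * β * ‖x‖) ?_).trans ?_
      · intro t ht
        rw [Set.uIoc_of_le ha.le] at ht
        have i1 := hbd ε x t ht.1.le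
        have i2 := hbd 0 x t ht.1.le
        have i3 := norm_nonneg (B.adjoint (T ε t x))
        have i4 := norm_nonneg (B.adjoint (T 0 t x))
        rw [Real.norm_eq_abs, abs_le]
        constructor <;> linarith
      · rw [sub_zero, abs_of_pos ha]
        have := mul_le_mul_of_nonneg_right haκ (norm_nonneg x)
        linarith
    have e2 : |(∫ t in a..(τ 0), ‖B.adjoint (T ε t x)‖) - ∫ t in a..(τ 0), ‖B.adjoint (T 0 t x)‖|
        ≤ κ / 3 * ‖x‖ := by
      rw [← intervalIntegral.integral_sub (hint ε x _ _) (hint 0 x _ _), ← Real.norm_eq_abs]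
      refine (intervalIntegral.norm_integral_le_of_norm_le_const
        (C := β * (κ / 3 / (β * τ 0 + 1) * ‖x‖)) ?_).trans ?_
      · intro t ht
        rw [Set.uIoc_of_le haτ] at ht
        rw [Real.norm_eq_abs]
        refine (abs_norm_sub_norm_le _ _).trans ?_
        rw [← map_sub, ← sub_apply]
        refine (B.adjoint.le_opNorm _).trans ?_
        gcongr
        exact (T ε t - T 0 t).le_of_opNorm_le (h1 t ⟨ht.1.le, ht.2⟩) x
      · rw [abs_of_nonneg (by linarith)]
        calc β * (κ / 3 / (β * τ 0 + 1) * ‖x‖) * (τ 0 - a)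
            ≤ β * (κ / 3 / (β * τ 0 + 1) * ‖x‖) * τ 0 := by gcongr; linarith
          _ = (β * τ 0) * (κ / 3 / (β * τ 0 + 1)) * ‖x‖ := by ring
          _ ≤ (β * τ 0 + 1) * (κ / 3 / (β * τ 0 + 1)) * ‖x‖ := by gcongr; linarith
          _ = κ / 3 * ‖x‖ := by
            have : β * τ 0 + 1 ≠ 0 := by positivity
            field_simp
    have e3 : |∫ t in (τ 0)..(τ ε), ‖B.adjoint (T ε t x)‖| ≤ κ / 3 * ‖x‖ := by
      rw [← Real.norm_eq_abs]
      refine (intervalIntegral.norm_integral_le_of_norm_le_const (C := β * ‖x‖) ?_).trans ?_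
      · intro t ht
        rw [norm_norm]
        apply hbd
        have := ht.1
        exact (le_min (hτ 0).le (hτ ε).le).trans this.le
      · rw [Real.dist_eq] at h2
        calc β * ‖x‖ * |τ ε - τ 0| ≤ (β + 1) * ‖x‖ * (κ / 3 / (β + 1)) := by
              gcongr
              linarith
          _ = κ / 3 * ‖x‖ := by field_simp
    rw [abs_le] at *
    constructor <;> linarith [e1.1, e1.2, e2.1, e2.2, e3.1, e3.2]
  · intro κ hκ
    have hψ : Tendsto (fun ε => T ε (τ ε) ψ) l (nhds (T 0 (τ 0) ψ)) := by
      have t1 : Tendsto (fun ε => T 0 (τ ε) ψ) l (nhds (T 0 (τ 0) ψ)) :=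
        (((h 0).cont ψ).tendsto (τ 0)).comp hτl
      have t2 : Tendsto (fun ε => T ε (τ ε) ψ - T 0 (τ ε) ψ) l (nhds 0) := by
        rw [Metric.tendsto_nhds]
        intro c hc
        have hc' : 0 < c / (‖ψ‖ + 1) := by positivity
        filter_upwards [sg_conv h hR (a := τ 0 / 2) (b := τ 0 + 1) (by positivity) hc',
          hτl.eventually (Icc_mem_nhds (by linarith : τ 0 / 2 < τ 0)
            (by linarith : τ 0 < τ 0 + 1))] with ε h1 h2
        rw [dist_zero_right, ← sub_apply]
        refine lt_of_le_of_lt ((T ε (τ ε) - T 0 (τ ε)).le_of_opNorm_le (h1 _ h2) ψ) ?_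
        calc c / (‖ψ‖ + 1) * ‖ψ‖ < c / (‖ψ‖ + 1) * (‖ψ‖ + 1) := by gcongr; linarith
          _ = c := by field_simp
      simpa using t2.add t1
    filter_upwards [Metric.tendsto_nhds.1 hψ κ hκ] with ε h1 x
    have e : ⟪ψ, T ε (τ ε) x⟫ - ⟪ψ, T 0 (τ 0) x⟫ = ⟪T ε (τ ε) ψ - T 0 (τ 0) ψ, x⟫ := by
      rw [inner_sub_left, (h ε).tsymm (hτ ε).le, (h 0).tsymm (hτ 0).le]
    change |⟪ψ, T ε (τ ε) x⟫ - ⟪ψ, T 0 (τ 0) x⟫| ≤ _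
    rw [e]
    refine (abs_real_inner_le_norm _ _).trans ?_
    rw [dist_eq_norm] at h1
    gcongr
  · intro x
    change |⟪ψ, T 0 (τ 0) x⟫| ≤ _
    refine (abs_real_inner_le_norm _ _).trans ?_
    rw [obsSem_eq _ _ _ (hτ 0).le, intervalIntegral.integral_of_le (hτ 0).le, mul_assoc]
    gcongr
    exact hobs x
  · intro x
    rw [obsSem_eq _ _ _ (hτ 0).le]
    have := intervalIntegral.norm_integral_le_of_norm_le_const (a := 0) (b := τ 0)
      (f := fun t => ‖B.adjoint (T 0 t x)‖) (C := β * ‖x‖) (by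
        intro t ht
        rw [Set.uIoc_of_le hτ0.le] at ht
        rw [norm_norm]
        exact hbd 0 x t ht.1.le)
    rw [sub_zero, abs_of_pos hτ0] at this
    refine (le_abs_self _).trans (this.trans (le_of_eq (by ring)))

end

/-- (Convergence of minimizers.) Under assumptions (C1)-(C4), if
`τ_ε → τ_0 > 0` and `η̂_ε` minimizes `J_ε^{τ_ε}`, then `η̂_ε → η̂_0` strongly in `X`;
consequently, for each `τ ∈ (0,τ̂)`, the optimal values `V*_ε(τ)` and the minimal norms
`N*_ε(τ)` (related by `V*_ε(τ) = -(1/2) N*_ε(τ)²`) converge to `V*_0(τ)` and `N*_0(τ)`. -/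
theorem stmt19 {X X₁ U : Type*}
    [NormedAddCommGroup X] [InnerProductSpace ℝ X] [CompleteSpace X]
    [NormedAddCommGroup X₁] [NormedSpace ℝ X₁]
    [NormedAddCommGroup U] [InnerProductSpace ℝ U] [CompleteSpace U]
    -- (C1): common domain `X₁` compactly embedded in `X`, each `A_ε` self-adjoint
    (ι : X₁ →L[ℝ] X) (hι_inj : Function.Injective ι) (hι_cpt : IsCompactOperator ι)
    (A : ℝ → X₁ →L[ℝ] X)
    (hsa : ∀ ε : ℝ, 0 ≤ ε → ∀ ψ φ : X₁, ⟪A ε ψ, ι φ⟫ = ⟪ι ψ, A ε φ⟫)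
    -- (C2): `A₀` strictly positive and `m₀⟨A₀ψ,ψ⟩ ≤ ⟨A_εψ,ψ⟩ ≤ m₁⟨A₀ψ,ψ⟩`
    (m₀ m₁ : ℝ) (hm₀ : 0 < m₀) (hm₁ : 0 < m₁)
    (hpos : ∀ ψ : X₁, ψ ≠ 0 → 0 < ⟪A 0 ψ, ι ψ⟫)
    (hcomp : ∀ ε : ℝ, 0 ≤ ε → ∀ ψ : X₁,
      m₀ * ⟪A 0 ψ, ι ψ⟫ ≤ ⟪A ε ψ, ι ψ⟫ ∧ ⟪A ε ψ, ι ψ⟫ ≤ m₁ * ⟪A 0 ψ, ι ψ⟫)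
    -- (C3): strong convergence of the resolvents `A_ε⁻¹ψ → A₀⁻¹ψ`
    (Ainv : ℝ → X →L[ℝ] X₁)
    (hAinv : ∀ ε : ℝ, 0 ≤ ε → (∀ x : X, A ε (Ainv ε x) = x) ∧ ∀ ψ : X₁, Ainv ε (A ε ψ) = ψ)
    (hres : ∀ x : X, Tendsto (fun ε => ι (Ainv ε x)) (nhdsWithin 0 (Set.Ioi 0))
      (nhds (ι (Ainv 0 x))))
    -- `T^ε` is the contraction semigroup generated by `-A_ε`
    (T : ℝ → ℝ → X →L[ℝ] X)
    (hT0 : ∀ ε : ℝ, 0 ≤ ε → T ε 0 = 1)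
    (hTadd : ∀ ε : ℝ, 0 ≤ ε → ∀ s t : ℝ, 0 ≤ s → 0 ≤ t → T ε (s + t) = (T ε s).comp (T ε t))
    (hTcont : ∀ ε : ℝ, 0 ≤ ε → ∀ x : X, Continuous fun t => T ε t x)
    (hTcontr : ∀ ε : ℝ, 0 ≤ ε → ∀ t : ℝ, 0 ≤ t → ‖T ε t‖ ≤ 1)
    (hgen : ∀ ε : ℝ, 0 ≤ ε → ∀ ψ : X₁, ∀ t : ℝ, 0 ≤ t →
      HasDerivAt (fun s => T ε s (ι ψ)) (-(T ε t (A ε ψ))) t)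
    -- (C4): the `L¹` observability inequality, uniform family version
    (B : U →L[ℝ] X) (K : ℝ → ℝ → ℝ)
    (hK_pos : ∀ ε : ℝ, 0 ≤ ε → ∀ τ : ℝ, 0 < τ → 0 < K ε τ)
    (hK_cont : ∀ ε : ℝ, 0 ≤ ε → ContinuousOn (K ε) (Set.Ioi 0))
    (hobs : ∀ ε : ℝ, 0 ≤ ε → ∀ τ : ℝ, 0 < τ → ∀ x : X,
      ‖T ε τ x‖ ≤ K ε τ * ∫ t in Set.Ioc 0 τ, ‖B.adjoint (T ε t x)‖)
    (r : ℝ) (hr : 0 < r) (ψ : X)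
    -- `τ_ε → τ_0 > 0`
    (τf : ℝ → ℝ) (hτpos : ∀ ε : ℝ, 0 ≤ ε → 0 < τf ε)
    (hτ : Tendsto τf (nhdsWithin 0 (Set.Ioi 0)) (nhds (τf 0)))
    -- `η̂_ε` is the minimizer of `J_ε^{τ_ε}`
    (ηh : ℝ → X)
    (hηh : ∀ ε : ℝ, 0 ≤ ε → ∀ ξ : X,
      Jeps (T ε) B r ψ (τf ε) (ηh ε) ≤ Jeps (T ε) B r ψ (τf ε) ξ)
    -- a fixed time `τ ∈ (0,τ̂)`
    (τ : ℝ) (hτ0 : 0 < τ) (hτhat : ∀ s ∈ Set.Ioc (0:ℝ) τ, r < ‖T 0 s ψ‖)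
    -- `ζ_ε` is the minimizer of `J_ε^τ`, `V*_ε(τ) = J_ε^τ(ζ_ε)` and `N*_ε(τ) ≥ 0` satisfies
    -- `V*_ε(τ) = -(1/2) N*_ε(τ)²`
    (ζ : ℝ → X)
    (hζ : ∀ ε : ℝ, 0 ≤ ε → ∀ ξ : X, Jeps (T ε) B r ψ τ (ζ ε) ≤ Jeps (T ε) B r ψ τ ξ)
    (Nstar : ℝ → ℝ)
    (hNstar : ∀ ε : ℝ, 0 ≤ ε → 0 ≤ Nstar ε ∧
      Jeps (T ε) B r ψ τ (ζ ε) = -(1 / 2) * (Nstar ε) ^ 2) :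
    -- strong convergence of the minimizers
    Tendsto ηh (nhdsWithin 0 (Set.Ioi 0)) (nhds (ηh 0)) ∧
    -- convergence of the optimal values `V*_ε(τ) → V*_0(τ)`
    Tendsto (fun ε => Jeps (T ε) B r ψ τ (ζ ε)) (nhdsWithin 0 (Set.Ioi 0))
      (nhds (Jeps (T 0) B r ψ τ (ζ 0))) ∧
    -- convergence of the minimal norms `N*_ε(τ) → N*_0(τ)`
    Tendsto Nstar (nhdsWithin 0 (Set.Ioi 0)) (nhds (Nstar 0)) := by
  set l := nhdsWithin (0:ℝ) (Set.Ioi 0) with hl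
  have hle : ∀ᶠ ε in l, (0:ℝ) < ε := self_mem_nhdsWithin
  have habs : ∀ᶠ ε in l, |ε| = ε := hle.mono fun ε h => abs_of_pos h
  have hsymm : ∀ ε : ℝ, 0 ≤ ε → ∀ x y : X, ⟪ι (Ainv ε x), y⟫ = ⟪x, ι (Ainv ε y)⟫ := by
    intro ε hε x y
    have := hsa ε hε (Ainv ε x) (Ainv ε y)
    rw [(hAinv ε hε).1, (hAinv ε hε).1] at this
    exact this.symm
  have hA0 : ∀ φ : X₁, 0 ≤ ⟪A 0 φ, ι φ⟫ := by
    intro φ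
    by_cases h : φ = 0
    · simp [h]
    · exact (hpos φ h).le
  have hRpos : ∀ ε : ℝ, 0 ≤ ε → ∀ x : X, 0 ≤ ⟪ι (Ainv ε x), x⟫ := by
    intro ε hε x
    have h1 := (hcomp ε hε (Ainv ε x)).1
    rw [(hAinv ε hε).1] at h1
    rw [real_inner_comm]
    exact (mul_nonneg hm₀.le (hA0 (Ainv ε x))).trans h1
  have hSG : ∀ ε : ℝ, SGP (T |ε|) (ι.comp (Ainv |ε|)) := by
    intro ε
    have hε := abs_nonneg ε
    refine ⟨hT0 _ hε, hTadd _ hε, hTcont _ hε, hTcontr _ hε, ?_, hsymm _ hε, hRpos _ hε, ?_⟩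
    · intro x t ht
      have := hgen _ hε (Ainv |ε| x) t ht
      rw [(hAinv _ hε).1] at this
      exact this
    · intro x hx
      have h1 : Ainv |ε| x = 0 := hι_inj (by simpa using hx)
      have h2 := (hAinv _ hε).1 x
      rw [h1, map_zero] at h2
      exact h2.symm
  have hform : ∀ ε : ℝ, 0 ≤ ε → ∀ x : X, ⟪ι (Ainv ε x), x⟫ ≤ m₀⁻¹ * ⟪ι (Ainv 0 x), x⟫ := by
    intro ε hε x
    set φ := Ainv ε x with hφ
    have h1 := cs_form (ι.comp (Ainv 0)) (hsymm 0 le_rfl) (hRpos 0 le_rfl) (A 0 φ) x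
    simp only [ContinuousLinearMap.comp_apply, (hAinv 0 le_rfl).2] at h1
    have h2 := (hcomp ε hε φ).1
    rw [hφ, (hAinv ε hε).1, ← hφ, real_inner_comm (ι φ) x, real_inner_comm (ι φ) (A 0 φ)] at h2
    have h3 := hRpos ε hε x
    have h4 := hRpos 0 le_rfl x
    rw [← hφ] at h3
    rw [inv_mul_eq_div, le_div_iff₀ hm₀]
    by_contra! hlt
    have h5 : 0 < ⟪ι φ, x⟫ := by nlinarith
    have h6 : m₀ * ⟪ι φ, x⟫ ^ 2 ≤ ⟪ι φ, x⟫ * ⟪ι (Ainv 0 x), x⟫ := by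
      calc _ ≤ m₀ * (⟪ι φ, A 0 φ⟫ * ⟪ι (Ainv 0 x), x⟫) := by gcongr
        _ = (m₀ * ⟪ι φ, A 0 φ⟫) * ⟪ι (Ainv 0 x), x⟫ := by ring
        _ ≤ _ := by gcongr
    nlinarith
  have hR : Tendsto (fun ε => ‖ι.comp (Ainv |0|) - ι.comp (Ainv |ε|)‖) l (nhds 0) := by
    refine res_conv (fun ε => ι.comp (Ainv |ε|)) m₀⁻¹ (by positivity) ?_ ?_ ?_ ?_ ?_
    · exact hι_cpt.comp_clm _
    · exact Eventually.of_forall fun ε => hsymm _ (abs_nonneg ε)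
    · exact Eventually.of_forall fun ε => hRpos _ (abs_nonneg ε)
    · refine Eventually.of_forall fun ε => ?_
      simpa using hform _ (abs_nonneg ε)
    · intro x
      simp only [abs_zero, ContinuousLinearMap.comp_apply]
      refine (hres x).congr' ?_
      filter_upwards [habs] with ε h
      rw [h]
  have hmain := fun (τ' : ℝ → ℝ) (h1 : ∀ ε : ℝ, 0 ≤ ε → 0 < τ' ε)
      (h2 : Tendsto τ' l (nhds (τ' 0))) (η' : ℝ → X)
      (h3 : ∀ ε : ℝ, 0 ≤ ε → ∀ ξ : X,
        Jeps (T ε) B r ψ (τ' ε) (η' ε) ≤ Jeps (T ε) B r ψ (τ' ε) ξ) =>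
    main_conv (l := l) (T := fun ε => T |ε|) hSG hR B (fun ε => τ' |ε|)
      (fun ε => h1 _ (abs_nonneg ε))
      (by
        rw [abs_zero]
        refine h2.congr' ?_
        filter_upwards [habs] with ε h
        rw [h])
      (K 0 (τ' 0)) (hK_pos 0 le_rfl _ (h1 0 le_rfl)).le
      (by
        rw [abs_zero]
        exact hobs 0 le_rfl _ (h1 0 le_rfl)) r hr ψ (fun ε => η' |ε|)
      (fun ε => h3 _ (abs_nonneg ε))
  simp only [abs_zero] at hmain
  have hV : Tendsto (fun ε => Jeps (T ε) B r ψ τ (ζ ε)) l (nhds (Jeps (T 0) B r ψ τ (ζ 0))) := by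
    refine (hmain (fun _ => τ) (fun _ _ => hτ0) tendsto_const_nhds ζ hζ).2.congr' ?_
    filter_upwards [habs] with ε h
    rw [h]
  refine ⟨?_, hV, ?_⟩
  · refine (hmain τf hτpos hτ ηh hηh).1.congr' ?_
    filter_upwards [habs] with ε h
    rw [h]
  · have hN : ∀ ε : ℝ, 0 ≤ ε → Nstar ε = Real.sqrt (-2 * Jeps (T ε) B r ψ τ (ζ ε)) := by
      intro ε hε
      rw [(hNstar ε hε).2]
      rw [show -2 * (-(1 / 2) * Nstar ε ^ 2) = Nstar ε ^ 2 by ring, Real.sqrt_sq (hNstar ε hε).1]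
    rw [hN 0 le_rfl]
    refine ((Real.continuous_sqrt.tendsto _).comp (hV.const_mul (-2))).congr' ?_
    filter_upwards [hle] with ε h
    exact (hN ε h.le).symm
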